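/- arXiv:2402.10536 — 6 statements merged into one kernel-verified Lean document; each statement's English description precedes it below -/
import Mathlib

section
/- Let ᾱ₁, σ̄₁, ā, c̄ ∈ ℝ with (ā, b̄) ≠ (0,0), where b̄ = 1 − ā − c̄, and let ℰ = ℰ(ᾱ₁, σ̄₁, ā, c̄). If Λ ⊆ ℝ is a compact set that is hyperbolic for ℰ, then Λ is expansive for ℰ: there exists χ > 0 such that for any two orbits (ξ_t)_{t∈ℤ} and (ξ̃_t)_{t∈ℤ} with (ξ_t, ξ_{t+1}) ∈ ℰ ∩ (Λ×Λ) and (ξ̃_t, ξ̃_{t+1}) ∈ ℰ ∩ (Λ×Λ) for all t, if ξ_0 ≠ ξ̃_0 then |ξ_n − ξ̃_n| ≥ χ for some n ∈ ℤ. -/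
noncomputable section

/-- The quadratic relation ℰ(ᾱ₁, σ̄₁, ā, c̄) on ℝ, with b̄ = 1 − ā − c̄. -/
def Erel (α σ a c : ℝ) : Set (ℝ × ℝ) :=
  {p : ℝ × ℝ | α - σ * p.1 + a * p.2 ^ 2 + (1 - a - c) * p.2 * p.1 + c * p.1 ^ 2 = 0}

/-- The slopeE m(u,v) of the tangent to the relation at (u,v). -/
def slopeE (σ a c : ℝ) (u v : ℝ) : ℝ :=
  (σ - (1 - a - c) * v - 2 * c * u) / (2 * a * v + (1 - a - c) * u)

/-- (ξ_t)_{t∈ℤ} is an orbit of the relation E lying in Λ. -/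
def IsOrbitIn (E : Set (ℝ × ℝ)) (Λ : Set ℝ) (ξ : ℤ → ℝ) : Prop :=
  ∀ t : ℤ, (ξ t, ξ (t + 1)) ∈ E ∩ Λ ×ˢ Λ

/-- Λ is expanding for ℰ(α,σ,a,c) with constants C > 0 and lam > 1. -/
def ExpandingRelWith (α σ a c : ℝ) (Λ : Set ℝ) (C lam : ℝ) : Prop :=
  ∀ ξ : ℤ → ℝ, IsOrbitIn (Erel α σ a c) Λ ξ →
    (∀ t : ℤ, 2 * a * ξ (t + 1) + (1 - a - c) * ξ t ≠ 0) ∧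
    ∀ t : ℤ, ∀ k : ℕ, 1 ≤ k →
      C * lam ^ k ≤ ∏ n ∈ Finset.range k, |slopeE σ a c (ξ (t + n)) (ξ (t + n + 1))|

/-- Λ is contracting for ℰ(α,σ,a,c) with constants C > 0 and lam > 1. -/
def ContractingRelWith (α σ a c : ℝ) (Λ : Set ℝ) (C lam : ℝ) : Prop :=
  ∀ ξ : ℤ → ℝ, IsOrbitIn (Erel α σ a c) Λ ξ →
    (∀ t : ℤ, slopeE σ a c (ξ t) (ξ (t + 1)) ≠ 0) ∧
    ∀ t : ℤ, ∀ k : ℕ, 1 ≤ k →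
      ∏ n ∈ Finset.range k, |slopeE σ a c (ξ (t + n)) (ξ (t + n + 1))| ≤ C⁻¹ * lam⁻¹ ^ k

def ExpandingRel (α σ a c : ℝ) (Λ : Set ℝ) : Prop :=
  ∃ C > 0, ∃ lam > 1, ExpandingRelWith α σ a c Λ C lam

def ContractingRel (α σ a c : ℝ) (Λ : Set ℝ) : Prop :=
  ∃ C > 0, ∃ lam > 1, ContractingRelWith α σ a c Λ C lam

/-- Λ is (uniformly) hyperbolic for the relation ℰ(α,σ,a,c). -/
def HyperbolicRel (α σ a c : ℝ) (Λ : Set ℝ) : Prop :=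
  ExpandingRel α σ a c Λ ∨ ContractingRel α σ a c Λ

def BackwardComplete (E : Set (ℝ × ℝ)) (Λ : Set ℝ) : Prop :=
  ∀ v ∈ Λ, ∃ u ∈ Λ, (u, v) ∈ E

def ForwardComplete (E : Set (ℝ × ℝ)) (Λ : Set ℝ) : Prop :=
  ∀ u ∈ Λ, ∃ v ∈ Λ, (u, v) ∈ E

/-- Σ^Λ : the set of bi-infinite orbits of the relation E lying in Λ. -/
def SigmaSet (E : Set (ℝ × ℝ)) (Λ : Set ℝ) : Set (ℤ → ℝ) :=
  {ξ | IsOrbitIn E Λ ξ}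

/-- The shift map S on bi-infinite sequences. -/
def shiftSeq {X : Type*} (z : ℤ → X) : ℤ → X := fun t => z (t + 1)

/-- A bounded bi-infinite real sequence (an element of l∞(ℤ,ℝ)). -/
def BddSeq (ζ : ℤ → ℝ) : Prop := ∃ M : ℝ, ∀ t : ℤ, |ζ t| ≤ M

/-!
The difference quotient of two nearby points of the quadratic relation equals the slope up to a
relative error which is small as long as both partial derivatives stay away from zero, and on the
compact space of orbits in `Λ` hyperbolicity keeps them away from zero. Hence if two orbits in `Λ`
stay `χ`-close for all times, their distance is multiplied at each step by the slope up to a factor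
`r`, with `r` as close to `1` as we like. For `1 < r < lam` the distance at time `0` is then at
most a constant times `(r / lam) ^ k` for every `k ≥ 1`, by comparison with time `k` in the
expanding case and with time `-k` in the contracting case; so it is zero.
-/

open Topology

section Products

variable {R : Type*} [CommSemiring R] [PartialOrder R] [IsOrderedRing R] {m x : ℤ → R} {r : R}

theorem prod_mul_le_pow_mul (hr : 0 ≤ r) (hm : ∀ t, 0 ≤ m t)
    (h : ∀ t, m t * x t ≤ r * x (t + 1)) (t : ℤ) (k : ℕ) :
    (∏ n ∈ Finset.range k, m (t + n)) * x t ≤ r ^ k * x (t + k) := by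
  induction k with
  | zero => simp
  | succ k ih =>
    rw [Finset.prod_range_succ, Nat.cast_succ, ← add_assoc]
    calc (∏ n ∈ Finset.range k, m (t + n)) * m (t + k) * x t
        = m (t + k) * ((∏ n ∈ Finset.range k, m (t + n)) * x t) := by ring
      _ ≤ m (t + k) * (r ^ k * x (t + k)) := mul_le_mul_of_nonneg_left ih (hm _)
      _ = r ^ k * (m (t + k) * x (t + k)) := by ring
      _ ≤ r ^ k * (r * x (t + k + 1)) := mul_le_mul_of_nonneg_left (h _) (pow_nonneg hr k)
      _ = r ^ (k + 1) * x (t + k + 1) := by ring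

theorem le_pow_mul_prod_mul (hr : 0 ≤ r) (hm : ∀ t, 0 ≤ m t)
    (h : ∀ t, x (t + 1) ≤ r * (m t * x t)) (t : ℤ) (k : ℕ) :
    x (t + k) ≤ r ^ k * ((∏ n ∈ Finset.range k, m (t + n)) * x t) := by
  induction k with
  | zero => simp
  | succ k ih =>
    rw [Finset.prod_range_succ, Nat.cast_succ, ← add_assoc]
    calc x (t + k + 1)
        ≤ r * (m (t + k) * x (t + k)) := h _
      _ ≤ r * (m (t + k) * (r ^ k * ((∏ n ∈ Finset.range k, m (t + n)) * x t))) :=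
          mul_le_mul_of_nonneg_left (mul_le_mul_of_nonneg_left ih (hm _)) hr
      _ = r ^ (k + 1) * ((∏ n ∈ Finset.range k, m (t + n)) * m (t + k) * x t) := by ring

end Products

section BoundedSequences

variable {K : Type*} [Field K] [LinearOrder K] [IsStrictOrderedRing K] [Archimedean K]

theorem nonpos_of_forall_le_mul_pow {x A q : K} (hq₀ : 0 ≤ q) (hq₁ : q < 1)
    (h : ∀ k : ℕ, 1 ≤ k → x ≤ A * q ^ k) : x ≤ 0 := by
  by_contra! hx
  have hA : 0 < A := pos_of_mul_pos_left (hx.trans_le (h 1 le_rfl)) (pow_nonneg hq₀ 1)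
  obtain ⟨k, hk⟩ := exists_pow_lt_of_lt_one (div_pos hx hA) hq₁
  have hlt : A * q ^ (k + 1) < x :=
    calc A * q ^ (k + 1)
        ≤ A * q ^ k :=
          mul_le_mul_of_nonneg_left (pow_le_pow_of_le_one hq₀ hq₁.le k.le_succ) hA.le
      _ < x := (lt_div_iff₀' hA).1 hk
  exact hlt.not_ge (h (k + 1) k.succ_pos)

variable {m x : ℤ → K} {B C lam r : K}

theorem nonpos_of_le_prod (hC : 0 < C) (hr : 0 < r) (hlam : r < lam) (hm : ∀ t, 0 ≤ m t)
    (hprod : ∀ (t : ℤ) (k : ℕ), 1 ≤ k → C * lam ^ k ≤ ∏ n ∈ Finset.range k, m (t + n))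
    (hstep : ∀ t, m t * x t ≤ r * x (t + 1)) (hB : ∀ t, x t ≤ B) (t : ℤ) : x t ≤ 0 := by
  have hlam₀ : 0 < lam := hr.trans hlam
  by_contra! hpos
  refine hpos.not_ge (nonpos_of_forall_le_mul_pow (A := B / C) (div_nonneg hr.le hlam₀.le)
    ((div_lt_one hlam₀).2 hlam) fun k hk => ?_)
  have hgrowth : C * lam ^ k * x t ≤ r ^ k * B :=
    calc C * lam ^ k * x t
        ≤ (∏ n ∈ Finset.range k, m (t + n)) * x t :=
          mul_le_mul_of_nonneg_right (hprod t k hk) hpos.le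
      _ ≤ r ^ k * x (t + k) := prod_mul_le_pow_mul hr.le hm hstep t k
      _ ≤ r ^ k * B := mul_le_mul_of_nonneg_left (hB _) (pow_nonneg hr.le k)
  rw [div_pow, div_mul_div_comm, le_div_iff₀ (by positivity)]
  linarith

theorem nonpos_of_prod_le (hC : 0 < C) (hr : 0 < r) (hlam : r < lam) (hm : ∀ t, 0 ≤ m t)
    (hprod : ∀ (t : ℤ) (k : ℕ), 1 ≤ k →
      ∏ n ∈ Finset.range k, m (t + n) ≤ C⁻¹ * lam⁻¹ ^ k)
    (hstep : ∀ t, x (t + 1) ≤ r * (m t * x t)) (hx : ∀ t, 0 ≤ x t) (hB : ∀ t, x t ≤ B)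
    (t : ℤ) : x t ≤ 0 := by
  have hlam₀ : 0 < lam := hr.trans hlam
  refine nonpos_of_forall_le_mul_pow (A := C⁻¹ * B) (div_nonneg hr.le hlam₀.le)
    ((div_lt_one hlam₀).2 hlam) fun k hk => ?_
  calc x t
      = x (t - k + k) := by rw [sub_add_cancel]
    _ ≤ r ^ k * ((∏ n ∈ Finset.range k, m (t - k + n)) * x (t - k)) :=
        le_pow_mul_prod_mul hr.le hm hstep (t - k) k
    _ ≤ r ^ k * (C⁻¹ * lam⁻¹ ^ k * B) := by
        gcongr
        exacts [hx _, hprod _ k hk, hB _]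
    _ = C⁻¹ * B * (r / lam) ^ k := by rw [div_eq_mul_inv, mul_pow]; ring

end BoundedSequences

section Orbits

variable {E : Set (ℝ × ℝ)} {Λ : Set ℝ}

/-- Expansivity of `Λ` for the relation `E`: distinct orbits in `Λ` separate by a uniform `χ` at
some time. As orbits can be shifted, only orbits differing at time `0` are compared. -/
def IsExpansiveIn (E : Set (ℝ × ℝ)) (Λ : Set ℝ) : Prop :=
  ∃ χ > 0, ∀ ξ ξ' : ℤ → ℝ, IsOrbitIn E Λ ξ → IsOrbitIn E Λ ξ' →
    ξ 0 ≠ ξ' 0 → ∃ n : ℤ, χ ≤ |ξ n - ξ' n|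

theorem isCompact_sigmaSet (hE : IsClosed E) (hΛ : IsCompact Λ) : IsCompact (SigmaSet E Λ) := by
  refine (isCompact_univ_pi fun _ : ℤ => hΛ).of_isClosed_subset ?_ fun ξ hξ t _ => (hξ t).2.1
  simp only [SigmaSet, IsOrbitIn, Set.ofPred_forall]
  exact isClosed_iInter fun t => (hE.inter (hΛ.isClosed.prod hΛ.isClosed)).preimage
    ((continuous_apply t).prodMk (continuous_apply (t + 1)))

theorem IsOrbitIn.comp_add_left {ξ : ℤ → ℝ} (hξ : IsOrbitIn E Λ ξ) (s : ℤ) :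
    IsOrbitIn E Λ fun t => ξ (s + t) := fun t => by
  simpa only [add_assoc] using hξ (s + t)

theorem exists_pos_forall_orbit_le_abs (hE : IsClosed E) (hΛ : IsCompact Λ) {f : ℝ → ℝ → ℝ}
    (hf : Continuous fun p : ℝ × ℝ => f p.1 p.2)
    (h : ∀ ξ, IsOrbitIn E Λ ξ → ∀ t, f (ξ t) (ξ (t + 1)) ≠ 0) :
    ∃ d > 0, ∀ ξ, IsOrbitIn E Λ ξ → ∀ t, d ≤ |f (ξ t) (ξ (t + 1))| := by
  have hcont : Continuous fun ξ : ℤ → ℝ => |f (ξ 0) (ξ 1)| :=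
    (hf.comp (by fun_prop : Continuous fun ξ : ℤ → ℝ => (ξ 0, ξ 1))).abs
  obtain ⟨d, hd, hle⟩ := (isCompact_sigmaSet hE hΛ).exists_forall_le'
    hcont.continuousOn (a := 0) fun ξ hξ => abs_pos.2 (h ξ hξ 0)
  exact ⟨d, hd, fun ξ hξ t => by simpa using hle _ (hξ.comp_add_left t)⟩

end Orbits

section Increments

theorem exists_one_add_le_mul_one_sub {K : Type*} [Field K] [LinearOrder K]
    [IsStrictOrderedRing K] {r : K} (hr : 1 < r) :
    ∃ η > 0, η < 1 ∧ 1 + η ≤ r * (1 - η) := by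
  refine ⟨(r - 1) / (r + 1), div_pos (by linarith) (by linarith), ?_, le_of_eq ?_⟩
  · rw [div_lt_one (by linarith)]
    linarith
  · field_simp
    ring

theorem abs_mul_abs_le_of_perturbed_mul_eq {R : Type*} [CommRing R] [LinearOrder R]
    [IsStrictOrderedRing R] {x y N D p q η r : R} (hη : η < 1)
    (hr : 1 + η ≤ r * (1 - η)) (hp : |p| ≤ η * |D|) (hq : |q| ≤ η * |N|)
    (hxy : y * (D - p) = x * (N - q)) : |N| * |x| ≤ r * (|D| * |y|) := by
  refine le_of_mul_le_mul_left ?_ (sub_pos.2 hη)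
  calc (1 - η) * (|N| * |x|)
      = |x| * (|N| - η * |N|) := by ring
    _ ≤ |x| * |N - q| := by
        gcongr
        linarith [abs_sub_abs_le_abs_sub N q]
    _ = |y| * |D - p| := by rw [← abs_mul, ← abs_mul, hxy]
    _ ≤ |y| * (|D| + η * |D|) := by
        gcongr
        linarith [abs_sub D p]
    _ = (1 + η) * (|D| * |y|) := by ring
    _ ≤ r * (1 - η) * (|D| * |y|) := by gcongr
    _ = (1 - η) * (r * (|D| * |y|)) := by ring

/-- Minus the partial derivative in `u` of the quadratic polynomial defining `Erel`: the numerator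
of `slopeE`. -/
def slopeNum (σ a c u v : ℝ) : ℝ := σ - (1 - a - c) * v - 2 * c * u

/-- The partial derivative in `v` of the quadratic polynomial defining `Erel`: the denominator of
`slopeE`. -/
def slopeDen (a c u v : ℝ) : ℝ := 2 * a * v + (1 - a - c) * u

theorem slopeE_eq_div (σ a c u v : ℝ) :
    slopeE σ a c u v = slopeNum σ a c u v / slopeDen a c u v := rfl

-- Second-order Taylor expansion at `(u, v)`, which is exact for a quadratic polynomial.
theorem sub_mul_slopeDen_sub_eq_of_mem_Erel {α σ a c u v u' v' : ℝ} (h : (u, v) ∈ Erel α σ a c)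
    (h' : (u', v') ∈ Erel α σ a c) :
    (v - v') * (slopeDen a c u v - (a * (v - v') + (1 - a - c) * (u - u'))) =
      (u - u') * (slopeNum σ a c u v - -c * (u - u')) := by
  simp only [Erel, Set.mem_ofPred_eq] at h h'
  rw [slopeDen, slopeNum]
  linear_combination h - h'

theorem isClosed_Erel (α σ a c : ℝ) : IsClosed (Erel α σ a c) :=
  isClosed_eq (by fun_prop) continuous_const

theorem exists_pos_forall_abs_linear_lt (a b c : ℝ) {ε : ℝ} (hε : 0 < ε) :
    ∃ χ > 0, ∀ x y : ℝ, |x| < χ → |y| < χ → |a * y + b * x| < ε ∧ |c * x| < ε := by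
  have herror : Filter.Tendsto (fun p : ℝ × ℝ => (a * p.2 + b * p.1, c * p.1)) (𝓝 0) (𝓝 0) :=
    Continuous.tendsto' (by fun_prop) _ _ (by simp)
  obtain ⟨χ, hχ, hball⟩ := Metric.tendsto_nhds_nhds.1 herror ε hε
  refine ⟨χ, hχ, fun x y hx hy => ?_⟩
  simpa [Prod.norm_def] using @hball (x, y) (by simpa [Prod.norm_def] using ⟨hx, hy⟩)

theorem exists_slopeE_increment_bounds (α σ a c : ℝ) {d r : ℝ} (hd : 0 < d) (hr : 1 < r) :
    ∃ χ > 0, ∀ u v u' v' : ℝ, (u, v) ∈ Erel α σ a c → (u', v') ∈ Erel α σ a c →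
      d ≤ |slopeNum σ a c u v| → d ≤ |slopeDen a c u v| → |u - u'| < χ → |v - v'| < χ →
      |slopeE σ a c u v| * |u - u'| ≤ r * |v - v'| ∧
        |v - v'| ≤ r * (|slopeE σ a c u v| * |u - u'|) := by
  obtain ⟨η, hη₀, hη₁, hηr⟩ := exists_one_add_le_mul_one_sub hr
  obtain ⟨χ, hχ, herror⟩ := exists_pos_forall_abs_linear_lt a (1 - a - c) (-c) (mul_pos hη₀ hd)
  refine ⟨χ, hχ, fun u v u' v' h h' hN hD hu hv => ?_⟩
  obtain ⟨hp, hq⟩ := herror _ _ hu hv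
  replace hp := hp.le.trans (mul_le_mul_of_nonneg_left hD hη₀.le)
  replace hq := hq.le.trans (mul_le_mul_of_nonneg_left hN hη₀.le)
  have hid := sub_mul_slopeDen_sub_eq_of_mem_Erel h h'
  have hD₀ : 0 < |slopeDen a c u v| := hd.trans_le hD
  rw [slopeE_eq_div, abs_div, div_mul_eq_mul_div, mul_div_assoc', div_le_iff₀ hD₀,
    le_div_iff₀ hD₀]
  have hlower := abs_mul_abs_le_of_perturbed_mul_eq hη₁ hηr hp hq hid
  have hupper := abs_mul_abs_le_of_perturbed_mul_eq hη₁ hηr hq hp hid.symm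
  constructor <;> linarith

end Increments

section Hyperbolic

variable {α σ a c : ℝ} {Λ : Set ℝ} {C lam : ℝ}

theorem exists_orbit_increment_bounds (hΛ : IsCompact Λ)
    (hslope : ∀ ξ, IsOrbitIn (Erel α σ a c) Λ ξ → ∀ t, slopeE σ a c (ξ t) (ξ (t + 1)) ≠ 0)
    {r : ℝ} (hr : 1 < r) :
    ∃ χ > 0, ∀ ξ ξ' : ℤ → ℝ,
      IsOrbitIn (Erel α σ a c) Λ ξ → IsOrbitIn (Erel α σ a c) Λ ξ' →
      (∀ n, |ξ n - ξ' n| < χ) → ∀ t : ℤ,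
        |slopeE σ a c (ξ t) (ξ (t + 1))| * |ξ t - ξ' t| ≤ r * |ξ (t + 1) - ξ' (t + 1)| ∧
        |ξ (t + 1) - ξ' (t + 1)| ≤
          r * (|slopeE σ a c (ξ t) (ξ (t + 1))| * |ξ t - ξ' t|) := by
  -- Since `x / 0 = 0`, a nonzero slope has a nonzero denominator, too.
  obtain ⟨dN, hdN, hN⟩ := exists_pos_forall_orbit_le_abs (isClosed_Erel α σ a c) hΛ
    (f := slopeNum σ a c) (by unfold slopeNum; fun_prop)
    fun ξ hξ t => (div_ne_zero_iff.1 (hslope ξ hξ t)).1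
  obtain ⟨dD, hdD, hD⟩ := exists_pos_forall_orbit_le_abs (isClosed_Erel α σ a c) hΛ
    (f := slopeDen a c) (by unfold slopeDen; fun_prop)
    fun ξ hξ t => (div_ne_zero_iff.1 (hslope ξ hξ t)).2
  obtain ⟨χ, hχ, hstep⟩ := exists_slopeE_increment_bounds α σ a c (lt_min hdN hdD) hr
  exact ⟨χ, hχ, fun ξ ξ' hξ hξ' hclose t => hstep _ _ _ _ (hξ t).1 (hξ' t).1
    (min_le_of_left_le (hN ξ hξ t)) (min_le_of_right_le (hD ξ hξ t)) (hclose t) (hclose (t + 1))⟩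

theorem ExpandingRelWith.slopeE_ne_zero (hC : 0 < C) (hlam : 0 < lam)
    (h : ExpandingRelWith α σ a c Λ C lam) (ξ : ℤ → ℝ) (hξ : IsOrbitIn (Erel α σ a c) Λ ξ)
    (t : ℤ) : slopeE σ a c (ξ t) (ξ (t + 1)) ≠ 0 := by
  have hle : C * lam ≤ |slopeE σ a c (ξ t) (ξ (t + 1))| := by simpa using (h ξ hξ).2 t 1 le_rfl
  exact abs_pos.1 ((mul_pos hC hlam).trans_le hle)

theorem ExpandingRel.isExpansiveIn (hΛ : IsCompact Λ) (h : ExpandingRel α σ a c Λ) :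
    IsExpansiveIn (Erel α σ a c) Λ := by
  obtain ⟨C, hC, lam, hlam, hexp⟩ := h
  obtain ⟨r, hr, hrlam⟩ := exists_between hlam
  have hr₀ : 0 < r := one_pos.trans hr
  obtain ⟨χ, hχ, hstep⟩ :=
    exists_orbit_increment_bounds hΛ (hexp.slopeE_ne_zero hC (hr₀.trans hrlam)) hr
  refine ⟨χ, hχ, fun ξ ξ' hξ hξ' hne => ?_⟩
  by_contra! hclose
  have hzero : |ξ 0 - ξ' 0| ≤ 0 :=
    nonpos_of_le_prod (m := fun t => |slopeE σ a c (ξ t) (ξ (t + 1))|)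
      (x := fun t => |ξ t - ξ' t|) hC hr₀ hrlam (fun _ => abs_nonneg _) (hexp ξ hξ).2
      (fun t => (hstep ξ ξ' hξ hξ' hclose t).1) (fun t => (hclose t).le) 0
  exact hne (sub_eq_zero.1 (abs_nonpos_iff.1 hzero))

theorem ContractingRel.isExpansiveIn (hΛ : IsCompact Λ) (h : ContractingRel α σ a c Λ) :
    IsExpansiveIn (Erel α σ a c) Λ := by
  obtain ⟨C, hC, lam, hlam, hcontr⟩ := h
  obtain ⟨r, hr, hrlam⟩ := exists_between hlam
  obtain ⟨χ, hχ, hstep⟩ := exists_orbit_increment_bounds hΛ (fun ξ hξ => (hcontr ξ hξ).1) hr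
  refine ⟨χ, hχ, fun ξ ξ' hξ hξ' hne => ?_⟩
  by_contra! hclose
  have hzero : |ξ 0 - ξ' 0| ≤ 0 :=
    nonpos_of_prod_le (m := fun t => |slopeE σ a c (ξ t) (ξ (t + 1))|)
      (x := fun t => |ξ t - ξ' t|) hC (one_pos.trans hr) hrlam (fun _ => abs_nonneg _)
      (hcontr ξ hξ).2 (fun t => (hstep ξ ξ' hξ hξ' hclose t).2) (fun _ => abs_nonneg _)
      (fun t => (hclose t).le) 0
  exact hne (sub_eq_zero.1 (abs_nonpos_iff.1 hzero))

end Hyperbolic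

/-- a compact hyperbolic set for the relation ℰ(ᾱ₁, σ̄₁, ā, c̄) (with
(ā, b̄) ≠ (0,0)) is expansive. -/
theorem hyperbolic_compact_is_expansive
    (α σ a c : ℝ) (hab : ¬(a = 0 ∧ 1 - a - c = 0))
    (Λ : Set ℝ) (hΛ : IsCompact Λ)
    (hhyp : HyperbolicRel α σ a c Λ) :
    ∃ χ > 0, ∀ ξ ξ' : ℤ → ℝ,
      IsOrbitIn (Erel α σ a c) Λ ξ → IsOrbitIn (Erel α σ a c) Λ ξ' →
      ξ 0 ≠ ξ' 0 → ∃ n : ℤ, χ ≤ |ξ n - ξ' n| := by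
  exact hhyp.elim (ExpandingRel.isExpansiveIn hΛ) (ContractingRel.isExpansiveIn hΛ)
end
end

section
/- Let (m_t)_{t∈ℤ} be a sequence of nonzero reals and suppose there are constants C > 0 and λ > 1 such that ∏_{n=0}^{k−1} |m_{t+n}| ≥ C·λ^k for all t ∈ ℤ and all k ≥ 1. Then for every bounded sequence η = (η_t)_{t∈ℤ} of reals, the system m_{t−1}⁻¹·ζ_t − ζ_{t−1} = η_t (t ∈ ℤ) has a unique bounded solution ζ = (ζ_t)_{t∈ℤ}, given by ζ_{t−1} = −η_t − Σ_{k=0}^{∞} (∏_{n=0}^{k} m_{t−1+n})⁻¹·η_{t+1+k}, and this solution satisfies |ζ_{t−1} + η_t| ≤ ‖η‖∞·C⁻¹·(λ−1)⁻¹ for all t ∈ ℤ. -/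
noncomputable section

/-!
A solution satisfies `ζ (t - 1) = m (t - 1)⁻¹ ζ t - η t`. Weighting the equation at time `t + i` by
`(m (t - 1) ⋯ m (t - 2 + i))⁻¹` and summing over `i < k` telescopes, leaving `-ζ (t - 1)` and a
remainder `(m (t - 1) ⋯ m (t - 2 + k))⁻¹ ζ (t - 1 + k)`. Expansion makes the inverse products
geometrically small, so for bounded `ζ` the remainder vanishes in the limit and `ζ` is forced to be
the Neumann series. Conversely that series converges, and splitting off its first term shows that
it solves the equation; the geometric sum of the other terms is the asserted bound.
-/

open Filter
open scoped ENNReal Topology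

/-- The product `m t * m (t + 1) * ⋯ * m (t + k - 1)` of `k` consecutive slopes starting at time
`t`, which is the cocycle of the linear recursion. -/
def slopeProd {M : Type*} [CommMonoid M] (m : ℤ → M) (t : ℤ) (k : ℕ) : M :=
  ∏ n ∈ Finset.range k, m (t + n)

section SlopeProd

variable {M : Type*} [CommMonoid M] (m : ℤ → M) (t : ℤ)

lemma slopeProd_zero : slopeProd m t 0 = 1 :=
  Finset.prod_range_zero _

lemma slopeProd_succ (k : ℕ) : slopeProd m t (k + 1) = slopeProd m t k * m (t + k) :=
  Finset.prod_range_succ _ k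

lemma slopeProd_succ' (k : ℕ) : slopeProd m t (k + 1) = m t * slopeProd m (t + 1) k := by
  simp only [slopeProd, Finset.prod_range_succ', Nat.cast_succ, Nat.cast_zero, add_zero,
    add_right_comm, ← add_assoc, mul_comm]

end SlopeProd

/-- The sequence `ζ` solves the system `m (t - 1)⁻¹ • ζ t - ζ (t - 1) = η t` for all times `t`. -/
def IsSolution {𝕜 E : Type*} [Inv 𝕜] [Sub E] [SMul 𝕜 E] (m : ℤ → 𝕜) (η ζ : ℤ → E) : Prop :=
  ∀ t, (m (t - 1))⁻¹ • ζ t - ζ (t - 1) = η t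

/-- The `k`-th term of the Neumann series whose sum is `-ζ (t - 1)` for the bounded
solution `ζ`. -/
def neumannTerm {𝕜 E : Type*} [CommMonoid 𝕜] [Inv 𝕜] [SMul 𝕜 E] (m : ℤ → 𝕜) (η : ℤ → E)
    (t : ℤ) (k : ℕ) : E :=
  (slopeProd m (t - 1) k)⁻¹ • η (t + k)

/-- The sequence read off from the Neumann series, which is the only candidate for a bounded
solution. It is meaningful only where the series converges, since a divergent `tsum` is `0`. -/
def neumannSolution {𝕜 E : Type*} [CommMonoid 𝕜] [Inv 𝕜] [AddCommGroup E] [TopologicalSpace E]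
    [SMul 𝕜 E] (m : ℤ → 𝕜) (η : ℤ → E) (t : ℤ) : E :=
  -∑' k, neumannTerm m η (t + 1) k

section Algebra

variable {𝕜 E : Type*} [Field 𝕜] [AddCommGroup E] [Module 𝕜 E] {m : ℤ → 𝕜} {η ζ : ℤ → E}

lemma neumannTerm_zero (m : ℤ → 𝕜) (η : ℤ → E) (t : ℤ) : neumannTerm m η t 0 = η t := by
  simp [neumannTerm, slopeProd_zero]

lemma neumannTerm_succ (m : ℤ → 𝕜) (η : ℤ → E) (t : ℤ) (k : ℕ) :
    neumannTerm m η t (k + 1) = (slopeProd m (t - 1) (k + 1))⁻¹ • η (t + 1 + k) := by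
  rw [neumannTerm, Nat.cast_succ, add_right_comm, add_assoc t]

lemma neumannTerm_succ_eq_smul (m : ℤ → 𝕜) (η : ℤ → E) (t : ℤ) (k : ℕ) :
    neumannTerm m η t (k + 1) = (m (t - 1))⁻¹ • neumannTerm m η (t + 1) k := by
  rw [neumannTerm_succ, slopeProd_succ', mul_inv, mul_smul, neumannTerm, sub_add_cancel,
    add_sub_cancel_right]

lemma IsSolution.sum_range_neumannTerm (h : IsSolution m η ζ) (t : ℤ) (k : ℕ) :
    ∑ i ∈ Finset.range k, neumannTerm m η t i =
      (slopeProd m (t - 1) k)⁻¹ • ζ (t - 1 + k) - ζ (t - 1) := by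
  have hterm (i : ℕ) : neumannTerm m η t i =
      (slopeProd m (t - 1) (i + 1))⁻¹ • ζ (t - 1 + (i + 1 : ℕ)) -
        (slopeProd m (t - 1) i)⁻¹ • ζ (t - 1 + i) := by
    rw [neumannTerm, ← h, slopeProd_succ, mul_inv, mul_smul, smul_sub, Nat.cast_succ,
      add_sub_right_comm, show t - 1 + (i + 1 : ℤ) = t + i by ring]
  simpa [hterm, slopeProd_zero] using
    Finset.sum_range_sub (fun i ↦ (slopeProd m (t - 1) i)⁻¹ • ζ (t - 1 + i)) k

end Algebra

/-- The slopes `m` are uniformly expanding: the products of `k` consecutive slopes grow at least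
like `C * lam ^ k`, with rate `lam > 1`, uniformly in the starting time. -/
structure IsExpanding {𝕜 : Type*} [NormedField 𝕜] (m : ℤ → 𝕜) (C lam : ℝ) : Prop where
  const_pos : 0 < C
  one_lt_rate : 1 < lam
  le_prod_norm (t : ℤ) (k : ℕ) : 1 ≤ k → C * lam ^ k ≤ ∏ n ∈ Finset.range k, ‖m (t + n)‖

lemma hasSum_inv_pow_succ {r : ℝ} (hr : 1 < r) :
    HasSum (fun k : ℕ ↦ (r ^ (k + 1))⁻¹) (r - 1)⁻¹ := by
  have hr₀ : 0 < r := one_pos.trans hr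
  have hgeom := (hasSum_geometric_of_lt_one (inv_nonneg.2 hr₀.le)
    (inv_lt_one_of_one_lt₀ hr)).mul_left r⁻¹
  rw [← mul_inv, mul_sub, mul_inv_cancel₀ hr₀.ne', mul_one] at hgeom
  simpa only [pow_succ', mul_inv, inv_pow] using hgeom

section Analysis

variable {𝕜 E : Type*} [NormedField 𝕜] [NormedAddCommGroup E] [NormedSpace 𝕜 E]
  {m : ℤ → 𝕜} {C lam : ℝ} {η ζ : ℤ → E}

namespace IsExpanding

lemma norm_inv_slopeProd_succ_le (hm : IsExpanding m C lam) (t : ℤ) (k : ℕ) :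
    ‖(slopeProd m t (k + 1))⁻¹‖ ≤ C⁻¹ * (lam ^ (k + 1))⁻¹ := by
  have hpos : 0 < C * lam ^ (k + 1) :=
    mul_pos hm.const_pos (pow_pos (one_pos.trans hm.one_lt_rate) _)
  rw [norm_inv, slopeProd, norm_prod, ← mul_inv]
  exact inv_anti₀ hpos (hm.le_prod_norm t (k + 1) k.succ_pos)

lemma tendsto_inv_slopeProd (hm : IsExpanding m C lam) (t : ℤ) :
    Tendsto (fun k ↦ (slopeProd m t k)⁻¹) atTop (𝓝 0) := by
  have hgeom := (hasSum_inv_pow_succ hm.one_lt_rate).summable.tendsto_atTop_zero.const_mul C⁻¹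
  rw [mul_zero] at hgeom
  exact (tendsto_add_atTop_iff_nat 1).1
    (squeeze_zero_norm (hm.norm_inv_slopeProd_succ_le t) hgeom)

lemma norm_neumannTerm_succ_le (hm : IsExpanding m C lam) (hη : Memℓp η ∞) (t : ℤ) (k : ℕ) :
    ‖neumannTerm m η t (k + 1)‖ ≤ (⨆ s, ‖η s‖) * C⁻¹ * (lam ^ (k + 1))⁻¹ := by
  have hinv := hm.norm_inv_slopeProd_succ_le (t - 1) k
  rw [neumannTerm_succ, norm_smul, mul_assoc, mul_comm (⨆ s, ‖η s‖)]
  exact mul_le_mul hinv (le_ciSup hη.bddAbove _) (norm_nonneg _) ((norm_nonneg _).trans hinv)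

lemma summable_norm_neumannTerm (hm : IsExpanding m C lam) (hη : Memℓp η ∞) (t : ℤ) :
    Summable fun k ↦ ‖neumannTerm m η t k‖ :=
  (summable_nat_add_iff 1).1 <| .of_nonneg_of_le (fun _ ↦ norm_nonneg _)
    (hm.norm_neumannTerm_succ_le hη t)
    ((hasSum_inv_pow_succ hm.one_lt_rate).summable.mul_left _)

lemma norm_tsum_neumannTerm_succ_le (hm : IsExpanding m C lam) (hη : Memℓp η ∞) (t : ℤ) :
    ‖∑' k, neumannTerm m η t (k + 1)‖ ≤ (⨆ s, ‖η s‖) * C⁻¹ * (lam - 1)⁻¹ :=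
  tsum_of_norm_bounded ((hasSum_inv_pow_succ hm.one_lt_rate).mul_left _)
    (hm.norm_neumannTerm_succ_le hη t)

end IsExpanding

namespace IsSolution

lemma hasSum_neumannTerm (h : IsSolution m η ζ) (hm : IsExpanding m C lam)
    (hη : Memℓp η ∞) (hζ : Memℓp ζ ∞) (t : ℤ) : HasSum (neumannTerm m η t) (-ζ (t - 1)) := by
  have hbdd : IsBoundedUnder (· ≤ ·) atTop (norm ∘ fun k : ℕ ↦ ζ (t - 1 + k)) :=
    isBoundedUnder_of ⟨⨆ s, ‖ζ s‖, fun _ ↦ le_ciSup hζ.bddAbove _⟩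
  have hremainder := (hm.tendsto_inv_slopeProd (t - 1)).zero_smul_isBoundedUnder_le hbdd
  rw [hasSum_iff_tendsto_nat_of_summable_norm (hm.summable_norm_neumannTerm hη t)]
  simpa only [h.sum_range_neumannTerm, zero_sub] using hremainder.sub_const (ζ (t - 1))

lemma eq_neumannSolution (h : IsSolution m η ζ) (hm : IsExpanding m C lam)
    (hη : Memℓp η ∞) (hζ : Memℓp ζ ∞) : ζ = neumannSolution m η := by
  funext t
  rw [neumannSolution, (h.hasSum_neumannTerm hm hη hζ (t + 1)).tsum_eq, neg_neg,
    add_sub_cancel_right]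

end IsSolution

namespace IsExpanding

variable [CompleteSpace E]

lemma neumannSolution_sub_one (hm : IsExpanding m C lam) (hη : Memℓp η ∞) (t : ℤ) :
    neumannSolution m η (t - 1) = -η t - ∑' k, neumannTerm m η t (k + 1) := by
  rw [neumannSolution, sub_add_cancel,
    (hm.summable_norm_neumannTerm hη t).of_norm.tsum_eq_zero_add, neumannTerm_zero, neg_add']

lemma isSolution_neumannSolution (hm : IsExpanding m C lam) (hη : Memℓp η ∞) :
    IsSolution m η (neumannSolution m η) := by
  intro t
  rw [hm.neumannSolution_sub_one hη]
  simp only [neumannTerm_succ_eq_smul, tsum_const_smul'', neumannSolution, smul_neg]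
  abel

lemma norm_neumannSolution_sub_one_add_le (hm : IsExpanding m C lam) (hη : Memℓp η ∞) (t : ℤ) :
    ‖neumannSolution m η (t - 1) + η t‖ ≤ (⨆ s, ‖η s‖) * C⁻¹ * (lam - 1)⁻¹ := by
  rw [hm.neumannSolution_sub_one hη, neg_sub_left, neg_add_rev, neg_add_cancel_comm, norm_neg]
  exact hm.norm_tsum_neumannTerm_succ_le hη t

lemma memℓp_neumannSolution (hm : IsExpanding m C lam) (hη : Memℓp η ∞) :
    Memℓp (neumannSolution m η) ∞ := by
  refine memℓp_infty ⟨(⨆ s, ‖η s‖) * C⁻¹ * (lam - 1)⁻¹ + ⨆ s, ‖η s‖, ?_⟩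
  rintro _ ⟨t, rfl⟩
  have hbound := hm.norm_neumannSolution_sub_one_add_le hη (t + 1)
  rw [add_sub_cancel_right] at hbound
  exact (norm_le_add_norm_add _ _).trans (add_le_add hbound (le_ciSup hη.bddAbove _))

end IsExpanding

theorem expanding_case_unique_bounded_solution_general [CompleteSpace E]
    (hm : IsExpanding m C lam) (hη : Memℓp η ∞) :
    (∃! ζ : ℤ → E, Memℓp ζ ∞ ∧ IsSolution m η ζ) ∧
    ∀ ζ : ℤ → E, Memℓp ζ ∞ → IsSolution m η ζ →
      (∀ t : ℤ, ζ (t - 1) =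
        -η t - ∑' k : ℕ, (slopeProd m (t - 1) (k + 1))⁻¹ • η (t + 1 + k)) ∧
      (∀ t : ℤ, ‖ζ (t - 1) + η t‖ ≤ (⨆ s : ℤ, ‖η s‖) * C⁻¹ * (lam - 1)⁻¹) := by
  refine ⟨⟨neumannSolution m η, ⟨hm.memℓp_neumannSolution hη, hm.isSolution_neumannSolution hη⟩,
    fun ζ hζ ↦ hζ.2.eq_neumannSolution hm hη hζ.1⟩, fun ζ hζ h ↦ ?_⟩
  obtain rfl := h.eq_neumannSolution hm hη hζ
  simp only [← neumannTerm_succ]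
  exact ⟨hm.neumannSolution_sub_one hη, hm.norm_neumannSolution_sub_one_add_le hη⟩

end Analysis

lemma bddSeq_iff_memℓp {ζ : ℤ → ℝ} : BddSeq ζ ↔ Memℓp ζ ∞ := by
  simp only [BddSeq, memℓp_infty_iff, bddAbove_def, Set.forall_mem_range, Real.norm_eq_abs]

/-- if the slope products grow as ∏|m| ≥ C·λ^k, then for every bounded η the
system m_{t−1}⁻¹ζ_t − ζ_{t−1} = η_t has a unique bounded solution, given by the explicit
series, and satisfying |ζ_{t−1} + η_t| ≤ ‖η‖∞ C⁻¹ (λ−1)⁻¹. -/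
theorem expanding_case_unique_bounded_solution
    (m : ℤ → ℝ) (hm : ∀ t : ℤ, m t ≠ 0)
    (C lam : ℝ) (hC : 0 < C) (hlam : 1 < lam)
    (hprod : ∀ t : ℤ, ∀ k : ℕ, 1 ≤ k →
      C * lam ^ k ≤ ∏ n ∈ Finset.range k, |m (t + n)|)
    (η : ℤ → ℝ) (hη : BddSeq η) :
    (∃! ζ : ℤ → ℝ, BddSeq ζ ∧ ∀ t : ℤ, (m (t - 1))⁻¹ * ζ t - ζ (t - 1) = η t) ∧
    ∀ ζ : ℤ → ℝ, BddSeq ζ → (∀ t : ℤ, (m (t - 1))⁻¹ * ζ t - ζ (t - 1) = η t) →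
      (∀ t : ℤ, ζ (t - 1) =
        -η t - ∑' k : ℕ, (∏ n ∈ Finset.range (k + 1), m (t - 1 + n))⁻¹ * η (t + 1 + k)) ∧
      (∀ t : ℤ, |ζ (t - 1) + η t| ≤ (⨆ s : ℤ, |η s|) * C⁻¹ * (lam - 1)⁻¹) := by
  simp only [bddSeq_iff_memℓp] at hη ⊢
  exact expanding_case_unique_bounded_solution_general (m := m) ⟨hC, hlam, hprod⟩ hη
end
end

section
/- Let (m_t)_{t∈ℤ} be a sequence of nonzero reals and suppose there are constants C > 0 and λ > 1 such that ∏_{n=0}^{k−1} |m_{t+n}| ≤ C⁻¹·λ^{−k} for all t ∈ ℤ and all k ≥ 1. Then for every bounded sequence η = (η_t)_{t∈ℤ} of reals, the system ζ_t − m_{t−1}·ζ_{t−1} = η_t (t ∈ ℤ) has a unique bounded solution ζ = (ζ_t)_{t∈ℤ}, given by ζ_t = η_t + Σ_{k=0}^{∞} (∏_{n=0}^{k} m_{t−1−k+n})·η_{t−1−k}, and this solution satisfies |ζ_t − η_t| ≤ ‖η‖∞·C⁻¹·(λ−1)⁻¹ for all t ∈ ℤ. -/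
noncomputable section

/-!
The equation `ζ x - A x • ζ (σ x) = η x` says `ζ = η + T ζ`, where `T` is the weighted composition
operator `ζ ↦ A • ζ ∘ σ`, and the weight of `T ^ k` is the product of `A` along the first `k` points
of the `σ`-orbit. If these products are bounded uniformly in `x` by a summable sequence, the Neumann
series `∑ T ^ k η` converges and solves the equation. A solution `δ` of the homogeneous equation
satisfies `δ = T ^ k δ` for all `k`, which tends to `0` when `δ` is bounded. The system on `ℤ` is
the case `σ t = t - 1`, `A t = m (t - 1)`, with a geometric dominating sequence.
-/

open Filter Set Topology

lemma hasSum_inv_pow_succ_s4 {K : Type*} [NormedDivisionRing K] {x : K} (hx : 1 < ‖x‖) :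
    HasSum (fun k : ℕ => x⁻¹ ^ (k + 1)) (x - 1)⁻¹ := by
  have hx₀ : x ≠ 0 := norm_pos_iff.1 (zero_lt_one.trans hx)
  have hinv : ‖x⁻¹‖ < 1 := by rw [norm_inv]; exact inv_lt_one_of_one_lt₀ hx
  have hval : x⁻¹ * (1 - x⁻¹)⁻¹ = (x - 1)⁻¹ := by
    rw [← mul_inv_rev, sub_mul, one_mul, inv_mul_cancel₀ hx₀]
  simpa only [pow_succ', hval] using (hasSum_geometric_of_norm_lt_one hinv).mul_left x⁻¹

variable {X R E : Type*} {σ : X → X} {A : X → R}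

/-- The linear cocycle `A x * A (σ x) * ⋯ * A (σ^[k-1] x)` generated by `A` over `σ`: the weight of
the `k`-th power of `ζ ↦ A • ζ ∘ σ`. The factors are ordered along the orbit, so that `R` may be
noncommutative. -/
def linearCocycle [Monoid R] (σ : X → X) (A : X → R) : ℕ → X → R
  | 0, _ => 1
  | k + 1, x => A x * linearCocycle σ A k (σ x)

lemma linearCocycle_pred_eq_prod [CommMonoid R] (m : ℤ → R) (k : ℕ) (t : ℤ) :
    linearCocycle Order.pred (fun s => m (s - 1)) k t = ∏ n ∈ Finset.range k, m (t - k + n) := by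
  induction k generalizing t with
  | zero => rfl
  | succ k ih =>
    have hstart : t - 1 - k = t - (k + 1 : ℕ) := by push_cast; ring
    have hlast : t - (k + 1 : ℕ) + k = t - 1 := by push_cast; ring
    rw [linearCocycle, ih, Order.pred_eq_sub_one, hstart, Finset.prod_range_succ, hlast, mul_comm]

lemma eq_linearCocycle_smul_iterate [Monoid R] [MulAction R E] {δ : X → E}
    (hδ : ∀ x, δ x = A x • δ (σ x)) (k : ℕ) (x : X) :
    δ x = linearCocycle σ A k x • δ (σ^[k] x) := by
  induction k generalizing x with
  | zero => exact (one_smul R (δ x)).symm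
  | succ k ih => rw [linearCocycle, mul_smul, Function.iterate_succ_apply, ← ih, ← hδ]

/-- The Neumann series `∑ T ^ k η` of the operator `T ζ = A • ζ ∘ σ`, the formal solution of
`ζ - T ζ = η`. It has the junk value `0` where the series diverges. -/
def cocycleSeries [Monoid R] [AddCommMonoid E] [TopologicalSpace E] [SMul R E]
    (σ : X → X) (A : X → R) (η : X → E) (x : X) : E :=
  ∑' k, linearCocycle σ A k x • η (σ^[k] x)

section Algebra

variable [Monoid R] [AddCommGroup E] [TopologicalSpace E] [IsTopologicalAddGroup E] [T2Space E]
  {η : X → E}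

lemma cocycleSeries_eq_add_tsum [MulAction R E] {x : X}
    (h : Summable fun k => linearCocycle σ A k x • η (σ^[k] x)) :
    cocycleSeries σ A η x = η x + ∑' k, linearCocycle σ A (k + 1) x • η (σ^[k + 1] x) := by
  rw [cocycleSeries, h.tsum_eq_zero_add, linearCocycle, one_smul, Function.iterate_zero_apply]

lemma cocycleSeries_sub_smul_comp [DistribMulAction R E] [ContinuousConstSMul R E]
    (h : ∀ x, Summable fun k => linearCocycle σ A k x • η (σ^[k] x)) (x : X) :
    cocycleSeries σ A η x - A x • cocycleSeries σ A η (σ x) = η x := by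
  rw [cocycleSeries_eq_add_tsum (h x), cocycleSeries, ← (h (σ x)).tsum_const_smul]
  simp only [linearCocycle, mul_smul, Function.iterate_succ_apply, add_sub_cancel_right]

end Algebra

section Uniqueness

variable [SeminormedRing R] [NormedAddCommGroup E] [Module R E] [IsBoundedSMul R E]

lemma eq_zero_of_eq_smul_comp (hA : ∀ x, Tendsto (linearCocycle σ A · x) atTop (𝓝 0))
    {δ : X → E} (hbdd : BddAbove (range fun x => ‖δ x‖)) (hδ : ∀ x, δ x = A x • δ (σ x)) :
    δ = 0 := by
  funext x
  have horbit : BddAbove (range fun k => ‖δ (σ^[k] x)‖) :=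
    hbdd.mono (range_comp_subset_range (σ^[·] x) fun y => ‖δ y‖)
  have hlim : Tendsto (fun k => linearCocycle σ A k x • δ (σ^[k] x)) atTop (𝓝 0) :=
    (hA x).op_zero_isBoundedUnder_le horbit.isBoundedUnder_of_range (· • ·) norm_smul_le
  exact tendsto_nhds_unique
    (tendsto_const_nhds.congr fun k => eq_linearCocycle_smul_iterate hδ k x) hlim

lemma eq_of_sub_smul_comp_eq (hA : ∀ x, Tendsto (linearCocycle σ A · x) atTop (𝓝 0))
    {ζ ξ : X → E} (hζ : BddAbove (range fun x => ‖ζ x‖)) (hξ : BddAbove (range fun x => ‖ξ x‖))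
    (h : ∀ x, ζ x - A x • ζ (σ x) = ξ x - A x • ξ (σ x)) : ζ = ξ := by
  refine sub_eq_zero.1 (eq_zero_of_eq_smul_comp hA (δ := ζ - ξ) ?_ fun x => ?_)
  · exact (hζ.range_add hξ).range_mono _ fun x => norm_sub_le _ _
  · rw [Pi.sub_apply, Pi.sub_apply, smul_sub]
    exact sub_eq_sub_iff_sub_eq_sub.1 (h x)

end Uniqueness

lemma tendsto_linearCocycle_zero [SeminormedRing R] {a : ℕ → ℝ} (ha : Summable a)
    (hA : ∀ k x, ‖linearCocycle σ A (k + 1) x‖ ≤ a k) (x : X) :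
    Tendsto (linearCocycle σ A · x) atTop (𝓝 0) :=
  (tendsto_add_atTop_iff_nat 1).1 (squeeze_zero_norm (hA · x) ha.tendsto_atTop_zero)

section Summability

variable [SeminormedRing R] [SeminormedAddCommGroup E] [Module R E] [IsBoundedSMul R E]
  {a : ℕ → ℝ} {η : X → E}

lemma norm_linearCocycle_smul_iterate_le (hA : ∀ k x, ‖linearCocycle σ A (k + 1) x‖ ≤ a k)
    (hη : BddAbove (range fun x => ‖η x‖)) (k : ℕ) (x : X) :
    ‖linearCocycle σ A (k + 1) x • η (σ^[k + 1] x)‖ ≤ (⨆ y, ‖η y‖) * a k :=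
  calc
    _ ≤ ‖linearCocycle σ A (k + 1) x‖ * ‖η (σ^[k + 1] x)‖ := norm_smul_le _ _
    _ ≤ a k * ⨆ y, ‖η y‖ :=
      mul_le_mul (hA k x) (le_ciSup hη _) (norm_nonneg _) ((norm_nonneg _).trans (hA k x))
    _ = (⨆ y, ‖η y‖) * a k := mul_comm _ _

lemma summable_linearCocycle_smul_iterate [CompleteSpace E] (ha : Summable a)
    (hA : ∀ k x, ‖linearCocycle σ A (k + 1) x‖ ≤ a k) (hη : BddAbove (range fun x => ‖η x‖))
    (x : X) : Summable fun k => linearCocycle σ A k x • η (σ^[k] x) :=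
  (summable_nat_add_iff 1).1 <|
    (ha.mul_left _).of_norm_bounded (norm_linearCocycle_smul_iterate_le hA hη · x)

end Summability

section Existence

variable [SeminormedRing R] [NormedAddCommGroup E] [Module R E] [IsBoundedSMul R E]
  [CompleteSpace E] {a : ℕ → ℝ} {S : ℝ} {η : X → E}

lemma norm_cocycleSeries_sub_le (ha : HasSum a S)
    (hA : ∀ k x, ‖linearCocycle σ A (k + 1) x‖ ≤ a k) (hη : BddAbove (range fun x => ‖η x‖))
    (x : X) : ‖cocycleSeries σ A η x - η x‖ ≤ (⨆ y, ‖η y‖) * S := by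
  rw [cocycleSeries_eq_add_tsum (summable_linearCocycle_smul_iterate ha.summable hA hη x),
    add_sub_cancel_left]
  exact tsum_of_norm_bounded (ha.mul_left _) (norm_linearCocycle_smul_iterate_le hA hη · x)

lemma bddAbove_range_norm_cocycleSeries (ha : Summable a)
    (hA : ∀ k x, ‖linearCocycle σ A (k + 1) x‖ ≤ a k) (hη : BddAbove (range fun x => ‖η x‖)) :
    BddAbove (range fun x => ‖cocycleSeries σ A η x‖) := by
  obtain ⟨S, hS⟩ := ha
  have hdiff : BddAbove (range fun x => ‖cocycleSeries σ A η x - η x‖) :=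
    ⟨_, forall_mem_range.2 (norm_cocycleSeries_sub_le hS hA hη)⟩
  exact (hη.range_add hdiff).range_mono _ fun x => norm_le_norm_add_norm_sub' _ _

theorem contracting_case_unique_bounded_solution_general (ha : HasSum a S)
    (hA : ∀ k x, ‖linearCocycle σ A (k + 1) x‖ ≤ a k) (hη : BddAbove (range fun x => ‖η x‖)) :
    (∃! ζ : X → E, BddAbove (range fun x => ‖ζ x‖) ∧ ∀ x, ζ x - A x • ζ (σ x) = η x) ∧
    ∀ ζ : X → E, BddAbove (range fun x => ‖ζ x‖) → (∀ x, ζ x - A x • ζ (σ x) = η x) →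
      (∀ x, ζ x = η x + ∑' k, linearCocycle σ A (k + 1) x • η (σ^[k + 1] x)) ∧
      ∀ x, ‖ζ x - η x‖ ≤ (⨆ y, ‖η y‖) * S := by
  have hsum := summable_linearCocycle_smul_iterate ha.summable hA hη
  have hbdd := bddAbove_range_norm_cocycleSeries ha.summable hA hη
  have hsol := cocycleSeries_sub_smul_comp hsum
  have huniq (ζ : X → E) (hζ : BddAbove (range fun x => ‖ζ x‖))
      (h : ∀ x, ζ x - A x • ζ (σ x) = η x) : ζ = cocycleSeries σ A η :=
    eq_of_sub_smul_comp_eq (tendsto_linearCocycle_zero ha.summable hA) hζ hbdd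
      fun x => (h x).trans (hsol x).symm
  refine ⟨⟨_, ⟨hbdd, hsol⟩, fun ζ hζ => huniq ζ hζ.1 hζ.2⟩, fun ζ hζ h => ?_⟩
  rw [huniq ζ hζ h]
  exact ⟨fun x => cocycleSeries_eq_add_tsum (hsum x), norm_cocycleSeries_sub_le ha hA hη⟩

end Existence

lemma bddSeq_iff_bddAbove_range_abs {ζ : ℤ → ℝ} :
    BddSeq ζ ↔ BddAbove (range fun t => |ζ t|) := by
  simp only [BddSeq, BddAbove, Set.Nonempty, mem_upperBounds, forall_mem_range]

/-- if the slope products decay as ∏|m| ≤ C⁻¹·λ^{−k}, then for every bounded η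
the system ζ_t − m_{t−1}ζ_{t−1} = η_t has a unique bounded solution, given by the explicit
series, and satisfying |ζ_t − η_t| ≤ ‖η‖∞ C⁻¹ (λ−1)⁻¹. -/
theorem contracting_case_unique_bounded_solution
    (m : ℤ → ℝ) (hm : ∀ t : ℤ, m t ≠ 0)
    (C lam : ℝ) (hC : 0 < C) (hlam : 1 < lam)
    (hprod : ∀ t : ℤ, ∀ k : ℕ, 1 ≤ k →
      ∏ n ∈ Finset.range k, |m (t + n)| ≤ C⁻¹ * lam⁻¹ ^ k)
    (η : ℤ → ℝ) (hη : BddSeq η) :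
    (∃! ζ : ℤ → ℝ, BddSeq ζ ∧ ∀ t : ℤ, ζ t - m (t - 1) * ζ (t - 1) = η t) ∧
    ∀ ζ : ℤ → ℝ, BddSeq ζ → (∀ t : ℤ, ζ t - m (t - 1) * ζ (t - 1) = η t) →
      (∀ t : ℤ, ζ t =
        η t + ∑' k : ℕ, (∏ n ∈ Finset.range (k + 1), m (t - 1 - k + n)) * η (t - 1 - k)) ∧
      (∀ t : ℤ, |ζ t - η t| ≤ (⨆ s : ℤ, |η s|) * C⁻¹ * (lam - 1)⁻¹) := by
  have ha : HasSum (fun k : ℕ => C⁻¹ * lam⁻¹ ^ (k + 1)) (C⁻¹ * (lam - 1)⁻¹) :=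
    (hasSum_inv_pow_succ_s4 (hlam.trans_le (le_abs_self lam))).mul_left C⁻¹
  have hA (k : ℕ) (t : ℤ) :
      ‖linearCocycle Order.pred (fun s => m (s - 1)) (k + 1) t‖ ≤ C⁻¹ * lam⁻¹ ^ (k + 1) := by
    rw [linearCocycle_pred_eq_prod, norm_prod]
    exact hprod _ _ k.succ_pos
  simpa only [linearCocycle_pred_eq_prod, Order.pred_iterate, Order.pred_eq_sub_one, smul_eq_mul,
    ← bddSeq_iff_bddAbove_range_abs, Real.norm_eq_abs, Nat.cast_succ, sub_add_eq_sub_sub_swap,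
    mul_assoc] using
    contracting_case_unique_bounded_solution_general (η := η) ha hA
      (bddSeq_iff_bddAbove_range_abs.1 hη)
end
end

section
/- Assume (r, ā, c̄) ∈ ℛₙ⁺ with associated compact set B, integer n ≥ 1 and constant λ > 1, and let φ : {−,+}^ℤ → B^ℤ assign to each s the unique sequence ξ with ξ_t = f_{s_t}(ξ_{t−1}) for all t ∈ ℤ. Let Σ̃ = φ({−,+}^ℤ) ⊆ ℝ^ℤ. Then, with {−,+}^ℤ and Σ̃ both carrying the product topology, φ is a homeomorphism from {−,+}^ℤ onto Σ̃, and it conjugates the shifts: φ(S(s)) = S(φ(s)) for every s ∈ {−,+}^ℤ, where S denotes the shift map (z_t)_t ↦ (z_{t+1})_t on each sequence space. In particular, the shift on Σ̃ is topologically conjugate to the full two-sided shift on two symbols. -/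
noncomputable section

/-- The two branches f₋, f₊ of the quadratic correspondence:
f_s(x) = (1/(2ā))(−b̄x + s√(Δx² + 4ā(rx+1))), with b̄ = 1 − ā − c̄, Δ = b̄² − 4āc̄;
the sign s is encoded by a boolean (`true` ↦ +, `false` ↦ −). -/
def fbr (r a c : ℝ) (s : Bool) (x : ℝ) : ℝ :=
  (1 / (2 * a)) * (-(1 - a - c) * x +
    (if s then (1 : ℝ) else -1) *
      Real.sqrt (((1 - a - c) ^ 2 - 4 * a * c) * x ^ 2 + 4 * a * (r * x + 1)))

/-- Composition of branches along a finite list of signs: for `l = [s₁, …, sₙ]`,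
`fcompL r a c l = f_{sₙ} ∘ ⋯ ∘ f_{s₁}`. -/
def fcompL (r a c : ℝ) : List Bool → ℝ → ℝ
  | [], x => x
  | s :: l, x => fcompL r a c l (fbr r a c s x)

/-- The t-th component 𝓕ⁿ_t(ξ; s) = f_{s_t} ∘ f_{s_{t−1}} ∘ ⋯ ∘ f_{s_{t−n+1}}(ξ_{t−n})
of the n-th iterate of the sequence map 𝓕(·; s). -/
def FnIter (r a c : ℝ) (n : ℕ) (s : ℤ → Bool) (ξ : ℤ → ℝ) (t : ℤ) : ℝ :=
  fcompL r a c (List.ofFn fun i : Fin n => s (t - n + 1 + i)) (ξ (t - n))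

/-!
The pairs `(s, ξ)` such that `ξ` is an orbit in `B` driven by `s` form a closed set, because the
maps are continuous and `B` is closed. This set is the graph of `φ`, whose values lie in the compact
product `B^ℤ`, so `φ` is continuous. A symbol is recovered from two consecutive terms of the orbit,
so `φ` is injective, and a continuous injection of a compact space into a Hausdorff space is a
homeomorphism onto its image. Shifting `s` and its orbit together gives an orbit again, which by
uniqueness is the orbit of the shifted sequence.
-/

open Set Filter Topology

theorem continuous_of_isClosed_graph_of_mem_compact {X Y : Type*} [TopologicalSpace X]
    [TopologicalSpace Y] {K : Set Y} (hK : IsCompact K) {g : X → Y} (hgK : ∀ x, g x ∈ K)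
    (hg : IsClosed {p : X × Y | p.2 = g p.1}) : Continuous g := by
  refine continuous_iff_continuousAt.mpr fun x =>
    hK.tendsto_nhds_of_unique_mapClusterPt (Eventually.of_forall hgK) fun y _ hy => ?_
  obtain ⟨U, hUx, hUy⟩ := mapClusterPt_iff_ultrafilter.mp hy
  have hU : Tendsto (fun z => (z, g z)) U (𝓝 (x, y)) := Tendsto.prodMk_nhds hUx hUy
  exact hg.mem_of_tendsto hU (Eventually.of_forall fun _ => rfl)

section DrivenOrbit

variable {A X : Type*} {f : A → X → X} {B : Set X} {s s' : ℤ → A} {ξ : ℤ → X}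

/-- `ξ` is a bi-infinite orbit in `B` of the maps `f i`, driven by the symbol sequence `s`; for
`f = fbr r a c` these are the AI states of `s`. The symbol `s t` leads from time `t - 1` to `t`. -/
structure IsDrivenOrbit (f : A → X → X) (B : Set X) (s : ℤ → A) (ξ : ℤ → X) : Prop where
  mem : ∀ t, ξ t ∈ B
  eq_apply : ∀ t, ξ t = f (s t) (ξ (t - 1))

theorem IsDrivenOrbit.shift (h : IsDrivenOrbit f B s ξ) :
    IsDrivenOrbit f B (shiftSeq s) (shiftSeq ξ) where
  mem t := h.mem (t + 1)
  eq_apply t := by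
    simpa only [shiftSeq, add_sub_cancel_right, sub_add_cancel] using h.eq_apply (t + 1)

theorem IsDrivenOrbit.symbols_unique (hf : ∀ x ∈ B, Function.Injective (f · x))
    (h : IsDrivenOrbit f B s ξ) (h' : IsDrivenOrbit f B s' ξ) : s = s' :=
  funext fun t => hf _ (h.mem (t - 1)) ((h.eq_apply t).symm.trans (h'.eq_apply t))

variable [TopologicalSpace A] [TopologicalSpace X] [T2Space X]

theorem isClosed_setOf_isDrivenOrbit (hB : IsClosed B)
    (hf : ContinuousOn (Function.uncurry f) (univ ×ˢ B)) :
    IsClosed {p : (ℤ → A) × (ℤ → X) | IsDrivenOrbit f B p.1 p.2} := by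
  have hmem : IsClosed {p : (ℤ → A) × (ℤ → X) | ∀ t, p.2 t ∈ B} := by
    simp only [ofPred_forall]
    exact isClosed_iInter fun t => hB.preimage (by fun_prop)
  have hstep (t : ℤ) : IsClosed {p ∈ {p : (ℤ → A) × (ℤ → X) | ∀ t, p.2 t ∈ B} |
      p.2 t = f (p.1 t) (p.2 (t - 1))} := by
    refine hmem.isClosed_eq (by fun_prop) ?_
    exact hf.comp (f := fun p : (ℤ → A) × (ℤ → X) => (p.1 t, p.2 (t - 1))) (by fun_prop)
      fun p hp => ⟨mem_univ _, hp (t - 1)⟩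
  convert isClosed_iInter hstep using 1
  ext p
  simp only [mem_iInter]
  exact ⟨fun h t => ⟨h.mem, h.eq_apply t⟩, fun h => ⟨(h 0).1, fun t => (h t).2⟩⟩

theorem continuous_of_unique_isDrivenOrbit (hB : IsCompact B)
    (hf : ContinuousOn (Function.uncurry f) (univ ×ˢ B)) {φ : (ℤ → A) → ℤ → X}
    (hφ : ∀ s, IsDrivenOrbit f B s (φ s)) (hφuniq : ∀ s ξ, IsDrivenOrbit f B s ξ → ξ = φ s) :
    Continuous φ := by
  refine continuous_of_isClosed_graph_of_mem_compact (isCompact_univ_pi fun _ => hB)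
    (fun s t _ => (hφ s).mem t) ?_
  convert isClosed_setOf_isDrivenOrbit hB.isClosed hf using 1
  ext ⟨s, ξ⟩
  exact ⟨fun h : ξ = φ s => h ▸ hφ s, hφuniq s ξ⟩

theorem AIstates_topologically_conjugate_full_shift_general [CompactSpace A] (hB : IsCompact B)
    (hf : ContinuousOn (Function.uncurry f) (univ ×ˢ B))
    (hfinj : ∀ x ∈ B, Function.Injective (f · x)) {φ : (ℤ → A) → ℤ → X}
    (hφ : ∀ s, IsDrivenOrbit f B s (φ s)) (hφuniq : ∀ s ξ, IsDrivenOrbit f B s ξ → ξ = φ s) :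
    ∃ H : (ℤ → A) ≃ₜ range φ,
      (∀ s, (H s : ℤ → X) = φ s) ∧ ∀ s, φ (shiftSeq s) = shiftSeq (φ s) := by
  have hcont : Continuous φ := continuous_of_unique_isDrivenOrbit hB hf hφ hφuniq
  have hinj : Function.Injective φ := fun s s' h =>
    (hφ s).symbols_unique hfinj (h ▸ hφ s')
  exact ⟨(hcont.isClosedEmbedding hinj).isEmbedding.toHomeomorph, fun _ => rfl,
    fun s => (hφuniq _ _ (hφ s).shift).symm⟩

end DrivenOrbit

theorem continuous_uncurry_fbr (r a c : ℝ) : Continuous (Function.uncurry (fbr r a c)) := by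
  refine continuous_prod_of_discrete_left.mpr fun s => ?_
  simp only [Function.uncurry_apply_pair, fbr]
  fun_prop

theorem fbr_left_injective {r a c x : ℝ} (ha : a ≠ 0)
    (hx : 0 < ((1 - a - c) ^ 2 - 4 * a * c) * x ^ 2 + 4 * a * (r * x + 1)) :
    Function.Injective (fbr r a c · x) := by
  intro s s' h
  have hsqrt := (Real.sqrt_pos.mpr hx).ne'
  have hsign : (if s then (1 : ℝ) else -1) = if s' then 1 else -1 :=
    mul_right_cancel₀ hsqrt <| add_left_cancel <|
      mul_left_cancel₀ (one_div_ne_zero (mul_ne_zero two_ne_zero ha)) h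
  cases s <;> cases s' <;> first | rfl | norm_num at hsign

/-- Proposition 4.4 of the paper.  If (r, ā, c̄) ∈ ℛₙ⁺ (witnessed by the
compact set B, n ≥ 1, λ > 1) and φ assigns to each symbol sequence s ∈ {−,+}^ℤ the unique
AI state with ξ_t = f_{s_t}(ξ_{t−1}), then, with the product topologies, φ is a
homeomorphism from {−,+}^ℤ onto Σ̃ = φ({−,+}^ℤ) conjugating the two shift maps; in
particular the shift on Σ̃ is topologically conjugate to the full two-sided 2-shift. -/
theorem AIstates_topologically_conjugate_full_shift
    (r a c : ℝ) (ha : a ≠ 0)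
    (B : Set ℝ) (hB : IsCompact B)
    (n : ℕ) (hn : 1 ≤ n) (lam : ℝ) (hlam : 1 < lam)
    (hpos : ∀ x ∈ B, 0 < ((1 - a - c) ^ 2 - 4 * a * c) * x ^ 2 + 4 * a * (r * x + 1))
    (hinv : ∀ s : Bool, ∀ x ∈ B, fbr r a c s x ∈ B)
    (hder : ∀ l : List Bool, l.length = n → ∀ x ∈ B, |deriv (fcompL r a c l) x| ≤ lam⁻¹)
    (φ : (ℤ → Bool) → (ℤ → ℝ))
    (hφ : ∀ s : ℤ → Bool,
      (∀ t : ℤ, φ s t ∈ B) ∧ ∀ t : ℤ, φ s t = fbr r a c (s t) (φ s (t - 1)))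
    (hφuniq : ∀ (s : ℤ → Bool) (ξ : ℤ → ℝ), (∀ t : ℤ, ξ t ∈ B) →
      (∀ t : ℤ, ξ t = fbr r a c (s t) (ξ (t - 1))) → ξ = φ s) :
    ∃ H : (ℤ → Bool) ≃ₜ ↥(Set.range φ),
      (∀ s : ℤ → Bool, (H s : ℤ → ℝ) = φ s) ∧
      ∀ s : ℤ → Bool, φ (shiftSeq s) = shiftSeq (φ s) := by
  exact AIstates_topologically_conjugate_full_shift_general hB
    (continuous_uncurry_fbr r a c).continuousOn (fun x hx => fbr_left_injective ha (hpos x hx))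
    (fun s => ⟨(hφ s).1, (hφ s).2⟩) fun s ξ h => hφuniq s ξ h.mem h.eq_apply
end
end

section
/- Let ᾱ₁ ∈ ℝ with ᾱ₁ ≠ 0, and let (ξ_t)_{t∈ℤ} be a sequence of reals with ξ_t·ξ_{t+1} = −ᾱ₁ for all t ∈ ℤ (so that each ξ_t ≠ 0 and ξ_{t+2} = ξ_t for all t; these are exactly the orbits of the relation ℰ(ᾱ₁, 0, 0, 0)). Then for every bounded sequence η = (η_t)_{t∈ℤ}, if a bounded sequence ζ = (ζ_t)_{t∈ℤ} satisfies ξ_{t−1}·ζ_t + ξ_t·ζ_{t−1} = η_t for all t ∈ ℤ, then the sequence ζ̂ defined by ζ̂_t = ζ_t + 1 for t even and ζ̂_t = ζ_t + ξ_t²/ᾱ₁ for t odd is a bounded solution of the same system and ζ̂ ≠ ζ. In particular, the linear operator on l∞(ℤ,ℝ) given by ζ ↦ (ξ_{t−1}·ζ_t + ξ_t·ζ_{t−1})_{t∈ℤ} is not injective, so every such orbit is a degenerate anti-integrable state. -/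
noncomputable section

/-- The perturbed sequence ζ̂ of Subsection 5.3: ζ̂_t = ζ_t + 1 for even t and
ζ̂_t = ζ_t + ξ_t²/ᾱ₁ for odd t. -/
def hatSeq (α : ℝ) (ξ ζ : ℤ → ℝ) : ℤ → ℝ :=
  fun t => if Even t then ζ t + 1 else ζ t + ξ t ^ 2 / α

/-! For every sequence `ξ`, the alternating sequence `(-1)ᵗ ξ_t` lies in the kernel of the operator
`ζ ↦ (ξ_{t-1} ζ_t + ξ_t ζ_{t-1})_t`, because the two summands cancel. On an orbit, the product
relation forces `ξ` to have period two, so this kernel element is bounded; rescaled to take the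
value `1` at `0`, it takes the value `-ξ_t / ξ_0 = ξ_t² / ᾱ₁` at odd `t`, so that it is exactly
`ζ̂ - ζ`. -/

namespace BddSeq

theorem add {f g : ℤ → ℝ} (hf : BddSeq f) (hg : BddSeq g) : BddSeq (f + g) := by
  obtain ⟨M, hM⟩ := hf
  obtain ⟨N, hN⟩ := hg
  exact ⟨M + N, fun t => (abs_add_le _ _).trans (add_le_add (hM t) (hN t))⟩

theorem of_periodic {f : ℤ → ℝ} {c : ℤ} (hf : Function.Periodic f c) (hc : c ≠ 0) :
    BddSeq f := by
  have hrange : (Set.range f).Finite :=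
    hf.image_uIcc hc 0 ▸ (Set.finite_uIcc 0 (0 + c)).image f
  obtain ⟨M, hM⟩ := hrange.isBounded.exists_norm_le
  exact ⟨M, fun t => hM (f t) (Set.mem_range_self t)⟩

end BddSeq

theorem periodic_two_of_mul_add_one_eq {ι M : Type*} [AddMonoidWithOne ι] [CommMonoidWithZero M]
    [IsCancelMulZero M] {c : M} (hc : c ≠ 0) {ξ : ι → M} (hξ : ∀ t, ξ t * ξ (t + 1) = c) :
    Function.Periodic ξ 2 := by
  intro t
  have hne : ξ (t + 1) ≠ 0 := right_ne_zero_of_mul (hξ t ▸ hc)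
  have hnext : ξ (t + 1) * ξ (t + 2) = c := by
    simpa only [add_assoc, one_add_one_eq_two] using hξ (t + 1)
  exact mul_left_cancel₀ hne (by rw [hnext, mul_comm, hξ t])

section Alternating

variable {A : Type*} [AddCommGroup A]

/-- The sequence `((-1)ᵗ ξ_t)_t`, the direction in which solutions are perturbed. The sign is the
unit `t.negOnePow` of `ℤ`, so that `ξ` may take values in any additive abelian group. -/
def alternating (ξ : ℤ → A) (t : ℤ) : A := t.negOnePow • ξ t

theorem alternating_of_even (ξ : ℤ → A) {t : ℤ} (ht : Even t) : alternating ξ t = ξ t := by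
  rw [alternating, Int.negOnePow_even t ht, one_smul]

theorem alternating_of_odd (ξ : ℤ → A) {t : ℤ} (ht : Odd t) : alternating ξ t = -ξ t := by
  rw [alternating, Int.negOnePow_odd t ht, Units.neg_smul, one_smul]

theorem periodic_alternating {ξ : ℤ → A} {c : ℤ} (hξ : Function.Periodic ξ c) (hc : Even c) :
    Function.Periodic (alternating ξ) c := fun t => by
  rw [alternating, hξ t, Int.negOnePow_add, Int.negOnePow_even c hc, mul_one, alternating]

end Alternating

section Linearization

variable {R : Type*} [CommRing R]

/-- The linearization at `ξ` of the map `ξ ↦ (ᾱ₁ + ξ_{t-1} ξ_t)_t`, whose zeros are the orbits of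
the relation `ℰ(ᾱ₁, 0, 0, 0)`. It is defined on all sequences; boundedness is tracked separately
by `BddSeq`. -/
def linearization (ξ : ℤ → R) : (ℤ → R) →ₗ[R] (ℤ → R) where
  toFun ζ t := ξ (t - 1) * ζ t + ξ t * ζ (t - 1)
  map_add' ζ ζ' := by
    ext t
    simp only [Pi.add_apply]
    ring
  map_smul' r ζ := by
    ext t
    simp only [Pi.smul_apply, smul_eq_mul, RingHom.id_apply]
    ring

theorem linearization_alternating (ξ : ℤ → R) : linearization ξ (alternating ξ) = 0 := by
  ext t
  change ξ (t - 1) * alternating ξ t + ξ t * alternating ξ (t - 1) = 0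
  rcases Int.even_or_odd t with ht | ht
  · rw [alternating_of_even ξ ht, alternating_of_odd ξ (ht.sub_odd odd_one)]
    ring
  · rw [alternating_of_odd ξ ht, alternating_of_even ξ (ht.sub_odd odd_one)]
    ring

end Linearization

theorem hatSeq_eq_add_smul_alternating {α : ℝ} (hα : α ≠ 0) {ξ : ℤ → ℝ}
    (hξ : ∀ t, ξ t * ξ (t + 1) = -α) (ζ : ℤ → ℝ) :
    hatSeq α ξ ζ = ζ + (ξ 0)⁻¹ • alternating ξ := by
  have hper : Function.Periodic ξ 2 := periodic_two_of_mul_add_one_eq (neg_ne_zero.mpr hα) hξ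
  have hξ₀ : ξ 0 ≠ 0 := left_ne_zero_of_mul (hξ 0 ▸ neg_ne_zero.mpr hα)
  have hξ_even {s : ℤ} (hs : Even s) : ξ s = ξ 0 := by
    obtain ⟨k, rfl⟩ := even_iff_exists_two_mul.mp hs
    rw [mul_comm]
    exact hper.int_mul_eq k
  ext t
  simp only [hatSeq, Pi.add_apply, Pi.smul_apply, smul_eq_mul]
  split_ifs with ht
  · rw [alternating_of_even ξ ht, hξ_even ht, inv_mul_cancel₀ hξ₀]
  · have hodd : Odd t := Int.not_even_iff_odd.mp ht
    have hprod : ξ t * ξ 0 = -α := by rw [← hξ_even hodd.add_one, hξ t]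
    rw [alternating_of_odd ξ hodd]
    field_simp
    linear_combination ξ t * hprod

/-- every orbit of the relation ℰ(ᾱ₁,0,0,0) (ᾱ₁ ≠ 0), i.e. every sequence
with ξ_t ξ_{t+1} = −ᾱ₁, is a degenerate AI state: whenever a bounded ζ solves
ξ_{t−1}ζ_t + ξ_t ζ_{t−1} = η_t for all t, so does the distinct bounded sequence ζ̂; in
particular ζ ↦ (ξ_{t−1}ζ_t + ξ_t ζ_{t−1})_t is not injective on l∞(ℤ,ℝ). -/
theorem degenerate_AI_states
    (α : ℝ) (hα : α ≠ 0) (ξ : ℤ → ℝ)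
    (hξ : ∀ t : ℤ, ξ t * ξ (t + 1) = -α)
    (η : ℤ → ℝ) (hη : BddSeq η)
    (ζ : ℤ → ℝ) (hζb : BddSeq ζ)
    (hζ : ∀ t : ℤ, ξ (t - 1) * ζ t + ξ t * ζ (t - 1) = η t) :
    BddSeq (hatSeq α ξ ζ) ∧
    (∀ t : ℤ, ξ (t - 1) * hatSeq α ξ ζ t + ξ t * hatSeq α ξ ζ (t - 1) = η t) ∧
    hatSeq α ξ ζ ≠ ζ := by
  have hhat := hatSeq_eq_add_smul_alternating hα hξ ζ
  refine ⟨?bounded, ?solves, ?distinct⟩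
  case bounded =>
    have hper : Function.Periodic ξ 2 := periodic_two_of_mul_add_one_eq (neg_ne_zero.mpr hα) hξ
    rw [hhat]
    exact hζb.add (.of_periodic ((periodic_alternating hper even_two).smul _) two_ne_zero)
  case solves =>
    have hsol : linearization ξ (hatSeq α ξ ζ) = η := by
      rw [hhat, map_add, map_smul, linearization_alternating, smul_zero, add_zero]
      exact funext hζ
    exact congrFun hsol
  case distinct =>
    intro h
    simpa [hatSeq] using congrFun h 0
end
end

section
/- Let 0 < c̄ < 1 and let ℰ = ℰ(0, 1, 1−c̄, c̄) = {(u,v) ∈ ℝ×ℝ : −u + (1−c̄)·v² + c̄·u² = 0} (here b̄ = 1 − (1−c̄) − c̄ = 0). Then: (a) if (u,v) ∈ ℰ then 0 ≤ u ≤ 1/c̄; and (b) every orbit (ξ_t)_{t∈ℤ} of ℰ (i.e., every sequence with (ξ_t, ξ_{t+1}) ∈ ℰ for all t ∈ ℤ) satisfies ξ_t ≥ 0 and ξ_t = √(ξ_{t−1}·(1 − c̄·ξ_{t−1})/(1−c̄)) for all t ∈ ℤ; that is, every bi-infinite orbit of the correspondence lies on the upper branch f₊(u) = √(u·(1 − c̄·u)/(1−c̄))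 of the ellipse. -/
noncomputable section

/-! Once the mixed term vanishes, the relation reads `α + (1 - c) v² + c u² = σ u`. Its left-hand
side is nonnegative, which confines the first coordinate. Every term of a bi-infinite orbit is the
first coordinate of the next pair, so it is nonnegative, and hence it is the nonnegative root of the
relation it satisfies as the second coordinate of the previous pair. -/

section EllipticRelation

variable {α σ c u v : ℝ}

theorem mem_Erel_one_sub_iff :
    (u, v) ∈ Erel α σ (1 - c) c ↔ α + (1 - c) * v ^ 2 + c * u ^ 2 = σ * u := by
  simp only [Erel, Set.mem_ofPred_eq]
  constructor <;> intro h <;> linear_combination h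

theorem fst_nonneg_of_mem_Erel (hα : 0 ≤ α) (hσ : 0 < σ) (hc0 : 0 ≤ c) (hc1 : c ≤ 1)
    (h : (u, v) ∈ Erel α σ (1 - c) c) : 0 ≤ u := by
  have hv : 0 ≤ (1 - c) * v ^ 2 := mul_nonneg (sub_nonneg.2 hc1) (sq_nonneg v)
  have hσu : 0 ≤ σ * u := by
    rw [← mem_Erel_one_sub_iff.1 h]
    exact add_nonneg (add_nonneg hα hv) (mul_nonneg hc0 (sq_nonneg u))
  exact nonneg_of_mul_nonneg_right hσu hσ

theorem fst_le_div_of_mem_Erel (hα : 0 ≤ α) (hσ : 0 < σ) (hc0 : 0 < c) (hc1 : c ≤ 1)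
    (h : (u, v) ∈ Erel α σ (1 - c) c) : u ≤ σ / c := by
  rcases (fst_nonneg_of_mem_Erel hα hσ hc0.le hc1 h).eq_or_lt with rfl | hu
  · positivity
  · have hv : 0 ≤ (1 - c) * v ^ 2 := mul_nonneg (sub_nonneg.2 hc1) (sq_nonneg v)
    have hmul : u * c * u ≤ σ * u := by linarith [mem_Erel_one_sub_iff.1 h]
    exact (le_div_iff₀ hc0).2 (le_of_mul_le_mul_right hmul hu)

theorem snd_eq_sqrt_of_mem_Erel (hc1 : c < 1) (hv : 0 ≤ v)
    (h : (u, v) ∈ Erel α σ (1 - c) c) :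
    v = Real.sqrt ((u * (σ - c * u) - α) / (1 - c)) := by
  have hsq : v ^ 2 = (u * (σ - c * u) - α) / (1 - c) := by
    rw [eq_div_iff (sub_pos.2 hc1).ne']
    linear_combination mem_Erel_one_sub_iff.1 h
  rw [← hsq, Real.sqrt_sq hv]

theorem orbits_lie_on_upper_branch_general (hα : 0 ≤ α) (hσ : 0 < σ) (hc0 : 0 < c) (hc1 : c < 1) :
    (∀ u v : ℝ, (u, v) ∈ Erel α σ (1 - c) c → 0 ≤ u ∧ u ≤ σ / c) ∧
    ∀ ξ : ℤ → ℝ, (∀ t : ℤ, (ξ t, ξ (t + 1)) ∈ Erel α σ (1 - c) c) →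
      ∀ t : ℤ, 0 ≤ ξ t ∧
        ξ t = Real.sqrt ((ξ (t - 1) * (σ - c * ξ (t - 1)) - α) / (1 - c)) := by
  refine ⟨fun u v h => ⟨fst_nonneg_of_mem_Erel hα hσ hc0.le hc1.le h,
    fst_le_div_of_mem_Erel hα hσ hc0 hc1.le h⟩, fun ξ hξ t => ?_⟩
  have hnonneg : 0 ≤ ξ t := fst_nonneg_of_mem_Erel hα hσ hc0.le hc1.le (hξ t)
  have hprev : (ξ (t - 1), ξ t) ∈ Erel α σ (1 - c) c := by
    simpa only [sub_add_cancel] using hξ (t - 1)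
  exact ⟨hnonneg, snd_eq_sqrt_of_mem_Erel hc1 hnonneg hprev⟩

end EllipticRelation

/-- for 0 < c̄ < 1, the relation ℰ(0, 1, 1−c̄, c̄) (an ellipse; b̄ = 0):
(a) any point (u,v) of the relation has 0 ≤ u ≤ 1/c̄; (b) every bi-infinite orbit lies on
the upper branch, i.e. ξ_t ≥ 0 and ξ_t = √(ξ_{t−1}(1 − c̄ ξ_{t−1})/(1 − c̄)) for all t. -/
theorem orbits_lie_on_upper_branch
    (cb : ℝ) (h0 : 0 < cb) (h1 : cb < 1) :
    (∀ u v : ℝ, (u, v) ∈ Erel 0 1 (1 - cb) cb → 0 ≤ u ∧ u ≤ 1 / cb) ∧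
    ∀ ξ : ℤ → ℝ, (∀ t : ℤ, (ξ t, ξ (t + 1)) ∈ Erel 0 1 (1 - cb) cb) →
      ∀ t : ℤ, 0 ≤ ξ t ∧
        ξ t = Real.sqrt (ξ (t - 1) * (1 - cb * ξ (t - 1)) / (1 - cb)) := by
  simpa only [sub_zero] using
    orbits_lie_on_upper_branch_general (α := 0) le_rfl one_pos h0 h1
end
end
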